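/- Let L be a commutative subspace lattice on H, let Φ be a rank preserving linear map on Alg L, and let N be a nonzero element of L with N₋ ≠ H. Then at least one of the following holds: (1) there exist a linear map U : N → H and a linear map V : N₋^⊥ → H such that Φ(x⊗f*) = (Ux)⊗(Vf)* for all x ∈ N and f ∈ N₋^⊥ (N is consistent with respect to Φ); (2) there exist conjugate-linear maps U : N₋^⊥ → H and V : N → H such that Φ(x⊗f*) = (Uf)⊗(Vx)* for all x ∈ N and f ∈ N₋^⊥ (N is twisted with respect to Φ). -/

import Mathlib

open scoped InnerProductSpace

noncomputable section

/-- The join (closed linear span) of a family of subspaces of a Hilbert space. -/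
def closedJoin {H : Type*} [NormedAddCommGroup H] [InnerProductSpace ℂ H]
    (S : Set (Submodule ℂ H)) : Submodule ℂ H :=
  (sSup S).topologicalClosure

/-- A subspace lattice on `H`: a family of closed subspaces containing `{0}` and `H`,
closed under arbitrary intersections and arbitrary closed linear spans. -/
structure IsSubspaceLattice {H : Type*} [NormedAddCommGroup H] [InnerProductSpace ℂ H]
    (L : Set (Submodule ℂ H)) : Prop where
  isClosed : ∀ E ∈ L, IsClosed (E : Set H)
  bot_mem : ⊥ ∈ L
  top_mem : ⊤ ∈ L
  sInf_mem : ∀ S : Set (Submodule ℂ H), S ⊆ L → sInf S ∈ L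
  join_mem : ∀ S : Set (Submodule ℂ H), S ⊆ L → closedJoin S ∈ L

/-- `M₋`: the join of all members of `L` that do not contain `M`. -/
def minus {H : Type*} [NormedAddCommGroup H] [InnerProductSpace ℂ H]
    (L : Set (Submodule ℂ H)) (M : Submodule ℂ H) : Submodule ℂ H :=
  closedJoin {E | E ∈ L ∧ ¬ M ≤ E}

open Classical in
/-- The orthogonal projection of `H` onto a closed subspace `E`, as an operator on `H`
(junk value `0` if `E` is not closed). -/
def projOf {H : Type*} [NormedAddCommGroup H] [InnerProductSpace ℂ H] [CompleteSpace H]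
    (E : Submodule ℂ H) : H →L[ℂ] H :=
  if h : IsClosed (E : Set H) then
    haveI : CompleteSpace E := h.completeSpace_coe
    E.subtypeL.comp (Submodule.orthogonalProjectionOnto E)
  else 0

/-- A commutative subspace lattice: the orthogonal projections onto members commute. -/
structure IsCSL {H : Type*} [NormedAddCommGroup H] [InnerProductSpace ℂ H] [CompleteSpace H]
    (L : Set (Submodule ℂ H)) extends IsSubspaceLattice L : Prop where
  commutes : ∀ E ∈ L, ∀ F ∈ L, projOf E * projOf F = projOf F * projOf E

/-- Complete distributivity of the lattice `L` (meets are intersections, joins are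
closed linear spans). -/
def IsCompletelyDistributive {H : Type*} [NormedAddCommGroup H] [InnerProductSpace ℂ H]
    (L : Set (Submodule ℂ H)) : Prop :=
  ∀ (I : Type) (J : I → Type) (E : (i : I) → J i → Submodule ℂ H),
    (∀ i j, E i j ∈ L) →
     ((⨅ i, closedJoin (Set.range (E i)))
        = closedJoin (Set.range fun φ : (∀ i, J i) => ⨅ i, E i (φ i)))
    ∧ (closedJoin (Set.range fun i => ⨅ j, E i j)
        = ⨅ φ : (∀ i, J i), closedJoin (Set.range fun i => E i (φ i)))

/-- `Alg L`: all bounded operators leaving every member of `L` invariant. -/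
def algL {H : Type*} [NormedAddCommGroup H] [InnerProductSpace ℂ H]
    (L : Set (Submodule ℂ H)) : Set (H →L[ℂ] H) :=
  {T | ∀ E ∈ L, ∀ x ∈ E, T x ∈ E}

/-- The rank one operator `x ⊗ f* : h ↦ ⟨h, f⟩ x`. -/
def rankOne {H : Type*} [NormedAddCommGroup H] [InnerProductSpace ℂ H]
    (x f : H) : H →L[ℂ] H :=
  (innerSL ℂ f).smulRight x

/-- The rank of a bounded operator: the dimension of its range. -/
def opRank {H : Type*} [NormedAddCommGroup H] [InnerProductSpace ℂ H]
    (T : H →L[ℂ] H) : Cardinal :=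
  Module.rank ℂ (LinearMap.range (T : H →ₗ[ℂ] H))

/-- `Φ` is a linear map of `Alg L` into itself. -/
structure IsLinearOnAlg {H : Type*} [NormedAddCommGroup H] [InnerProductSpace ℂ H]
    (L : Set (Submodule ℂ H)) (Φ : (H →L[ℂ] H) → (H →L[ℂ] H)) : Prop where
  maps : ∀ A ∈ algL L, Φ A ∈ algL L
  map_add : ∀ A ∈ algL L, ∀ B ∈ algL L, Φ (A + B) = Φ A + Φ B
  map_smul : ∀ (c : ℂ), ∀ A ∈ algL L, Φ (c • A) = c • Φ A

/-- `Φ` preserves the rank of every finite rank operator in `Alg L`. -/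
def RankPreserving {H : Type*} [NormedAddCommGroup H] [InnerProductSpace ℂ H]
    (L : Set (Submodule ℂ H)) (Φ : (H →L[ℂ] H) → (H →L[ℂ] H)) : Prop :=
  ∀ A ∈ algL L, opRank A < Cardinal.aleph0 → opRank (Φ A) = opRank A

/-- `a ∼ b`: (nonzero) vectors `a` and `b` are linearly dependent. -/
def Dep {H : Type*} [NormedAddCommGroup H] [InnerProductSpace ℂ H] (a b : H) : Prop :=
  ∃ c : ℂ, c ≠ 0 ∧ b = c • a

/-- `N` is consistent with respect to `Φ`. -/
def Consistent {H : Type*} [NormedAddCommGroup H] [InnerProductSpace ℂ H]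
    (L : Set (Submodule ℂ H)) (Φ : (H →L[ℂ] H) → (H →L[ℂ] H))
    (N : Submodule ℂ H) : Prop :=
  N ≠ ⊥ ∧ minus L N ≠ ⊤ ∧
    ∃ (U : N →ₗ[ℂ] H) (V : ((minus L N)ᗮ : Submodule ℂ H) →ₗ[ℂ] H),
      ∀ (x : N) (f : ((minus L N)ᗮ : Submodule ℂ H)),
        Φ (rankOne (x : H) (f : H)) = rankOne (U x) (V f)

/-- `N` is twisted with respect to `Φ`. -/
def Twisted {H : Type*} [NormedAddCommGroup H] [InnerProductSpace ℂ H]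
    (L : Set (Submodule ℂ H)) (Φ : (H →L[ℂ] H) → (H →L[ℂ] H))
    (N : Submodule ℂ H) : Prop :=
  N ≠ ⊥ ∧ minus L N ≠ ⊤ ∧
    ∃ (U : ((minus L N)ᗮ : Submodule ℂ H) →ₗ⋆[ℂ] H) (V : N →ₗ⋆[ℂ] H),
      ∀ (x : N) (f : ((minus L N)ᗮ : Submodule ℂ H)),
        Φ (rankOne (x : H) (f : H)) = rankOne (U f) (V x)

/-- `N` is isolated: `dim N = 1` and `N^⊥ ∈ L`. -/
def Isolated {H : Type*} [NormedAddCommGroup H] [InnerProductSpace ℂ H]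
    (L : Set (Submodule ℂ H)) (N : Submodule ℂ H) : Prop :=
  Module.rank ℂ N = 1 ∧ Nᗮ ∈ L

/-- The family `F` of all `N ∈ L` with `N ≠ {0}` and `N₋ ≠ H`. -/
def famF {H : Type*} [NormedAddCommGroup H] [InnerProductSpace ℂ H]
    (L : Set (Submodule ℂ H)) : Set (Submodule ℂ H) :=
  {N | N ∈ L ∧ N ≠ ⊥ ∧ minus L N ≠ ⊤}

/-- Subspaces are comparable if one contains the other. -/
def Comparable' {H : Type*} [NormedAddCommGroup H] [InnerProductSpace ℂ H]
    (M N : Submodule ℂ H) : Prop :=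
  M ≤ N ∨ N ≤ M

/-- There is a chain in `F` from `M` to `N`. -/
def ChainConn {H : Type*} [NormedAddCommGroup H] [InnerProductSpace ℂ H]
    (L : Set (Submodule ℂ H)) (M N : Submodule ℂ H) : Prop :=
  ∃ (n : ℕ) (c : Fin (n + 1) → Submodule ℂ H),
    (∀ k, c k ∈ famF L) ∧ c 0 = M ∧ c (Fin.last n) = N ∧
      ∀ k : Fin n, Comparable' (c k.castSucc) (c k.succ)

/-- `𝔊_N`: all members of `F` that can be connected to `N` by a chain. -/
def GSet {H : Type*} [NormedAddCommGroup H] [InnerProductSpace ℂ H]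
    (L : Set (Submodule ℂ H)) (N : Submodule ℂ H) : Set (Submodule ℂ H) :=
  {M | M ∈ famF L ∧ ChainConn L N M}

end


/-! Both `(x, f) ↦ Φ (x ⊗ f*)` and `(a, b) ↦ a ⊗ b*` are sesquilinear maps into the operators of
rank at most one. A subspace of such operators is covered by those with a fixed left factor and
those with a fixed right factor, so it lies in one of these two subspaces. Hence the operators
`Φ (x ⊗ f*)` with `x` fixed have a common left or a common right factor, and likewise those with
`f` fixed. Comparing rows with columns shows that one alternative holds for all `x` and the
opposite one for all `f`. Common left factors for fixed `x` make `N` consistent, common right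
factors make it twisted; exchanging the two factors of the target swaps the alternatives. -/

section SemilinearMaps

open LinearMap

variable {K : Type*} [Field K] {σ τ σ' τ' α β γ δ : K →+* K}
  {X Y Z P Q T : Type*} [AddCommGroup X] [Module K X] [AddCommGroup Y] [Module K Y]
  [AddCommGroup Z] [Module K Z] [AddCommGroup P] [Module K P] [AddCommGroup Q] [Module K Q]
  [AddCommGroup T] [Module K T]

lemma mem_span_singleton_symm {v w : Z} (hv : v ≠ 0) (h : v ∈ K ∙ w) : w ∈ K ∙ v := by
  obtain ⟨c, rfl⟩ := Submodule.mem_span_singleton.1 h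
  have hc : c ≠ 0 := left_ne_zero_of_smul hv
  exact Submodule.mem_span_singleton.2 ⟨c⁻¹, inv_smul_smul₀ hc w⟩

lemma exists_comp_eq_of_range_le [RingHomSurjective τ] [RingHomSurjective τ']
    [RingHomCompTriple β τ' τ] {g : Q →ₛₗ[τ'] T} (hg : Function.Injective g)
    {D : Y →ₛₗ[τ] T} (h : range D ≤ range g) : ∃ W : Y →ₛₗ[β] Q, ∀ y, g (W y) = D y := by
  choose W hW using fun y => h (mem_range_self D y)
  refine ⟨{ toFun := W, map_add' := fun y z => hg ?_, map_smul' := fun c y => hg ?_ }, hW⟩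
  · simp only [map_add, hW]
  · simp only [map_smulₛₗ, hW, RingHomCompTriple.comp_apply]

lemma exists_eq_smul_of_forall_mem_span_singleton [RingHomSurjective β] {W W' : Y →ₛₗ[β] Q}
    (hW : Function.Injective W) (h : ∀ y, W' y ∈ K ∙ W y) : ∃ c : K, ∀ y, W' y = c • W y := by
  have hscale : ∀ c y, ∃ d : K, W (d • y) = c • W y := fun c y => by
    obtain ⟨d, rfl⟩ := RingHomSurjective.is_surjective (σ := β) c
    exact ⟨d, map_smulₛₗ W d y⟩
  have hrange : range W' ≤ range W := by
    rintro _ ⟨y, rfl⟩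
    exact (Submodule.span_singleton_le_iff_mem _ _).2 (mem_range_self W y) (h y)
  obtain ⟨e, he⟩ := exists_comp_eq_of_range_le (β := RingHom.id K) hW hrange
  have hdep : ∀ y, ¬ LinearIndependent K ![y, e y] := fun y hind => by
    obtain ⟨c, hc⟩ := Submodule.mem_span_singleton.1 (h y)
    obtain ⟨d, hd⟩ := hscale c y
    have hy0 : y ≠ 0 := hind.ne_zero 0
    exact (LinearIndependent.pair_iff' hy0).1 hind d (hW (by rw [hd, hc, he]))
  obtain ⟨d, hd⟩ := exists_eq_smul_id_of_forall_notLinearIndependent hdep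
  exact ⟨β d, fun y => by rw [← he, hd, LinearMap.smul_apply, Module.End.one_apply, map_smulₛₗ]⟩

lemma ne_zero_of_apply_ne_zero {B : X →ₛₗ[σ] Y →ₛₗ[τ] T} {x : X} {y : Y}
    (h : B x y ≠ 0) : x ≠ 0 ∧ y ≠ 0 :=
  ⟨by rintro rfl; exact h (map_zero₂ B y), by rintro rfl; exact h (map_zero (B x))⟩

lemma range_apply_le_of_mem_span_singleton [RingHomSurjective τ] (B : X →ₛₗ[σ] Y →ₛₗ[τ] T)
    {x x' : X} (h : x' ∈ K ∙ x) : range (B x') ≤ range (B x) := by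
  obtain ⟨c, rfl⟩ := Submodule.mem_span_singleton.1 h
  rintro _ ⟨y, rfl⟩
  rw [map_smulₛₗ₂]
  exact Submodule.smul_mem _ _ (mem_range_self _ y)

/-- `B : X × Y → T` behaves like `(x, y) ↦ x ⊗ y`, the set `R` playing the part of the tensors of
rank at most one: values of `B` lie in `R`, are nonzero on nonzero vectors, and a sum of two of them
lies in `R` only if the left or the right factors are proportional. -/
structure IsSegreMap (R : Set T) (B : X →ₛₗ[σ] Y →ₛₗ[τ] T) : Prop where
  apply_mem : ∀ x y, B x y ∈ R
  eq_zero_or_eq_zero : ∀ {x y}, B x y = 0 → x = 0 ∨ y = 0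
  mem_span_or_mem_span : ∀ {x y x' y'}, x ≠ 0 → y ≠ 0 → B x y + B x' y' ∈ R →
    x' ∈ K ∙ x ∨ y' ∈ K ∙ y

/-- A Segre map all of whose target set `R` consists of pure tensors. -/
structure IsSegreSurjection (R : Set T) (ρ : P →ₛₗ[σ] Q →ₛₗ[τ] T) : Prop
    extends IsSegreMap R ρ where
  exists_apply_eq : ∀ t ∈ R, ∃ a b, ρ a b = t

/-- The values of `D` are of the form `ρ a _` with one and the same left factor `a`. A common right
factor is a common left factor with respect to `ρ.flip`. -/
def HasCommonLeft [RingHomSurjective σ] [RingHomSurjective τ'] (ρ : P →ₛₗ[σ'] Q →ₛₗ[τ'] T)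
    (D : Z →ₛₗ[σ] T) : Prop :=
  ∃ a, range D ≤ range (ρ a)

lemma hasCommonLeft_zero [RingHomSurjective σ] [RingHomSurjective τ']
    (ρ : P →ₛₗ[σ'] Q →ₛₗ[τ'] T) : HasCommonLeft ρ (0 : Z →ₛₗ[σ] T) :=
  ⟨0, by rw [range_zero]; exact bot_le⟩

namespace IsSegreMap

variable {R : Set T} {B : X →ₛₗ[σ] Y →ₛₗ[τ] T} {x x' : X} {y y' : Y}

lemma flip (hB : IsSegreMap R B) : IsSegreMap R B.flip where
  apply_mem y x := hB.apply_mem x y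
  eq_zero_or_eq_zero h := (hB.eq_zero_or_eq_zero h).symm
  mem_span_or_mem_span hy hx h := (hB.mem_span_or_mem_span hx hy h).symm

lemma apply_ne_zero (hB : IsSegreMap R B) (hx : x ≠ 0) (hy : y ≠ 0) : B x y ≠ 0 :=
  fun h => (hB.eq_zero_or_eq_zero h).elim hx hy

lemma injective_apply (hB : IsSegreMap R B) (hx : x ≠ 0) : Function.Injective (B x) :=
  (injective_iff_map_eq_zero (B x)).2 fun _ h => (hB.eq_zero_or_eq_zero h).resolve_left hx

variable [RingHomSurjective τ]

lemma right_mem_span_of_apply_eq (hB : IsSegreMap R B) (h0 : B x y ≠ 0) (h : B x y = B x' y')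
    (hx : x' ∈ K ∙ x) : y' ∈ K ∙ y := by
  obtain ⟨hx0, hy0⟩ := ne_zero_of_apply_ne_zero h0
  obtain ⟨c, rfl⟩ := Submodule.mem_span_singleton.1 hx
  obtain ⟨d, hd⟩ := RingHomSurjective.is_surjective (σ := τ) (σ c)
  have hy : y = d • y' := hB.injective_apply hx0 (by rw [h, map_smulₛₗ₂, map_smulₛₗ, hd])
  exact mem_span_singleton_symm hy0 (Submodule.mem_span_singleton.2 ⟨d, hy.symm⟩)

variable [RingHomSurjective σ]

lemma mem_span_of_apply_eq (hB : IsSegreMap R B) (h0 : B x y ≠ 0) (h : B x y = B x' y') :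
    x' ∈ K ∙ x ∧ y' ∈ K ∙ y := by
  obtain ⟨hx0, hy0⟩ := ne_zero_of_apply_ne_zero h0
  have hsum : B x y + B (-x') y' ∈ R := by
    rw [map_neg₂, h, add_neg_cancel, ← map_zero (B 0)]
    exact hB.apply_mem 0 0
  rcases hB.mem_span_or_mem_span hx0 hy0 hsum with hx | hy
  · rw [Submodule.neg_mem_iff] at hx
    exact ⟨hx, hB.right_mem_span_of_apply_eq h0 h hx⟩
  · exact ⟨hB.flip.right_mem_span_of_apply_eq h0 h hy, hy⟩

lemma range_apply_le_of_mem (hB : IsSegreMap R B) {t : T} (ht : t ≠ 0) (hx : t ∈ range (B x))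
    (hx' : t ∈ range (B x')) : range (B x') ≤ range (B x) := by
  obtain ⟨y, rfl⟩ := hx
  obtain ⟨y', hy'⟩ := hx'
  exact range_apply_le_of_mem_span_singleton B (hB.mem_span_of_apply_eq ht hy'.symm).1

lemma inf_range_le_span_singleton (hB : IsSegreMap R B) {t : T} (ht : t ≠ 0)
    (htx : t ∈ range (B x)) (hty : t ∈ range (B.flip y)) :
    range (B x) ⊓ range (B.flip y) ≤ K ∙ t := by
  rintro s ⟨⟨y₁, rfl⟩, ⟨x₁, hs⟩⟩
  obtain ⟨y₂, rfl⟩ := htx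
  obtain ⟨x₂, ht'⟩ := hty
  by_cases h0 : B x y₁ = 0
  · rw [h0]; exact zero_mem _
  have hs0 : B x₁ y ≠ 0 := fun h => h0 (hs.symm.trans h)
  have h₁ : y₁ ∈ K ∙ y := (hB.mem_span_of_apply_eq hs0 hs).2
  have h₂ : y ∈ K ∙ y₂ := (hB.mem_span_of_apply_eq ht ht'.symm).2
  obtain ⟨c, rfl⟩ := Submodule.mem_span_singleton.1 (Submodule.mem_span_singleton_trans h₁ h₂)
  rw [map_smulₛₗ]
  exact Submodule.smul_mem _ _ (Submodule.mem_span_singleton_self _)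

end IsSegreMap

namespace IsSegreSurjection

variable {R : Set T} {ρ : P →ₛₗ[σ'] Q →ₛₗ[τ'] T} {B : X →ₛₗ[σ] Y →ₛₗ[τ] T} {x y : X} {f : Y}

lemma flip (hρ : IsSegreSurjection R ρ) : IsSegreSurjection R ρ.flip where
  toIsSegreMap := hρ.toIsSegreMap.flip
  exists_apply_eq t ht := by
    obtain ⟨a, b, h⟩ := hρ.exists_apply_eq t ht
    exact ⟨b, a, h⟩

variable [RingHomSurjective τ']

lemma hasCommonLeft_of_forall_mem_span [RingHomSurjective τ] (hρ : IsSegreSurjection R ρ)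
    (hB : IsSegreMap R B) (x : X) (h : ∀ g, g ∈ K ∙ f) : HasCommonLeft ρ (B x) := by
  obtain ⟨a, b, hab⟩ := hρ.exists_apply_eq _ (hB.apply_mem x f)
  refine ⟨a, ?_⟩
  rintro _ ⟨g, rfl⟩
  obtain ⟨c, rfl⟩ := Submodule.mem_span_singleton.1 (h g)
  rw [map_smulₛₗ, ← hab]
  exact Submodule.smul_mem _ _ (mem_range_self _ b)

variable [RingHomSurjective σ']

lemma le_range_or_le_range_flip (hρ : IsSegreSurjection R ρ) {W : Submodule K T}
    (hW : (W : Set T) ⊆ R) : (∃ a, W ≤ range (ρ a)) ∨ ∃ b, W ≤ range (ρ.flip b) := by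
  -- An additive group is never the union of two proper subgroups.
  by_cases hbot : W = ⊥
  · exact .inl ⟨0, hbot ▸ bot_le⟩
  obtain ⟨s, hs, hs0⟩ := Submodule.exists_mem_ne_zero_of_ne_bot hbot
  obtain ⟨a, b, rfl⟩ := hρ.exists_apply_eq s (hW hs)
  obtain ⟨ha, hb⟩ := ne_zero_of_apply_ne_zero hs0
  have hcover : (W : Set T) ⊆ range (ρ a) ∪ range (ρ.flip b) := by
    intro t ht
    obtain ⟨a', b', rfl⟩ := hρ.exists_apply_eq t (hW ht)
    exact (hρ.mem_span_or_mem_span ha hb (hW (W.add_mem hs ht))).imp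
      (fun h => range_apply_le_of_mem_span_singleton ρ h (mem_range_self _ b'))
      (fun h => range_apply_le_of_mem_span_singleton ρ.flip h (mem_range_self _ a'))
  exact (AddSubgroupClass.subset_union.1 hcover).imp (⟨a, ·⟩) (⟨b, ·⟩)

lemma hasCommonLeft_or_flip [RingHomSurjective τ] (hρ : IsSegreSurjection R ρ)
    (hB : IsSegreMap R B) (x : X) :
    HasCommonLeft ρ (B x) ∨ HasCommonLeft ρ.flip (B x) :=
  hρ.le_range_or_le_range_flip (by rintro _ ⟨f, rfl⟩; exact hB.apply_mem x f)

lemma mem_span_of_hasCommonLeft [RingHomSurjective σ] (hρ : IsSegreSurjection R ρ)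
    (hB : IsSegreMap R B) (hf : f ≠ 0) (hleft : HasCommonLeft ρ (B.flip f))
    (hright : HasCommonLeft ρ.flip (B.flip f)) (hx : x ≠ 0) : y ∈ K ∙ x := by
  obtain ⟨a, ha⟩ := hleft
  obtain ⟨b, hb⟩ := hright
  have hle : range (B.flip f) ≤ K ∙ B x f := (le_inf ha hb).trans <|
    hρ.inf_range_le_span_singleton (hB.apply_ne_zero hx hf) (ha (mem_range_self _ x))
      (hb (mem_range_self _ x))
  obtain ⟨c, hc⟩ := Submodule.mem_span_singleton.1 (hle (mem_range_self _ y))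
  obtain ⟨d, rfl⟩ := RingHomSurjective.is_surjective (σ := σ) c
  have hy : d • x = y := hB.flip.injective_apply hf (by rw [map_smulₛₗ, ← hc, flip_apply])
  exact Submodule.mem_span_singleton.2 ⟨d, hy⟩

variable [RingHomSurjective σ] [RingHomSurjective τ]

lemma hasCommonLeft_apply_or_flip_apply (hρ : IsSegreSurjection R ρ) (hB : IsSegreMap R B)
    (x : X) (f : Y) : HasCommonLeft ρ (B x) ∨ HasCommonLeft ρ (B.flip f) := by
  by_cases h0 : B x f = 0
  · rcases hB.eq_zero_or_eq_zero h0 with rfl | rfl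
    · exact .inl (by rw [map_zero]; exact hasCommonLeft_zero ρ)
    · exact .inr (by rw [map_zero]; exact hasCommonLeft_zero ρ)
  by_contra! ⟨hrow, hcol⟩
  obtain ⟨b, hb⟩ := (hρ.hasCommonLeft_or_flip hB x).resolve_left hrow
  obtain ⟨b', hb'⟩ := (hρ.hasCommonLeft_or_flip hB.flip f).resolve_left hcol
  have hle : range (B.flip f) ≤ range (ρ.flip b) := hb'.trans <|
    hρ.flip.range_apply_le_of_mem h0 (hb (mem_range_self _ f)) (hb' (mem_range_self _ x))
  have hsum : ∀ y g, B x g + B y f ∈ R := fun y g => by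
    obtain ⟨a, ha⟩ := add_mem (hb (mem_range_self _ g)) (hle (mem_range_self _ y))
    exact (show ρ a b = B x g + B y f from ha) ▸ hρ.apply_mem a b
  have hline : (∀ y, y ∈ K ∙ x) ∨ ∀ g, g ∈ K ∙ f := by
    by_contra! ⟨⟨y, hy⟩, ⟨g, hg⟩⟩
    have hx0 : x ≠ 0 := (ne_zero_of_apply_ne_zero h0).1
    have hf0 : f ≠ 0 := (ne_zero_of_apply_ne_zero h0).2
    have hg0 : g ≠ 0 := by rintro rfl; exact hg (zero_mem _)
    exact (hB.mem_span_or_mem_span hx0 hg0 (hsum y g)).elim hy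
      fun h => hg (mem_span_singleton_symm hf0 h)
  exact hline.elim (fun h => hcol (hρ.hasCommonLeft_of_forall_mem_span hB.flip f h))
    (fun h => hrow (hρ.hasCommonLeft_of_forall_mem_span hB x h))

lemma forall_hasCommonLeft_flip_of_not (hρ : IsSegreSurjection R ρ) (hB : IsSegreMap R B)
    (hx : ¬ HasCommonLeft ρ (B x)) :
    (∀ y, HasCommonLeft ρ.flip (B y)) ∧ ∀ f, HasCommonLeft ρ (B.flip f) := by
  have hcols : ∀ f, HasCommonLeft ρ (B.flip f) := fun f =>
    (hρ.hasCommonLeft_apply_or_flip_apply hB x f).resolve_left hx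
  refine ⟨fun y => by_contra fun hy => ?_, hcols⟩
  have hBx : B x ≠ 0 := fun h => hx (h ▸ hasCommonLeft_zero ρ)
  obtain ⟨f, hf⟩ := DFunLike.ne_iff.1 hBx
  obtain ⟨hx0, hf0⟩ := ne_zero_of_apply_ne_zero hf
  have hcol : HasCommonLeft ρ.flip (B.flip f) :=
    (hρ.flip.hasCommonLeft_apply_or_flip_apply hB y f).resolve_left hy
  have hyx : y ∈ K ∙ x := hρ.mem_span_of_hasCommonLeft hB hf0 (hcols f) hcol hx0
  obtain ⟨b, hb⟩ := (hρ.hasCommonLeft_or_flip hB x).resolve_left hx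
  exact hy ⟨b, (range_apply_le_of_mem_span_singleton B hyx).trans hb⟩

lemma forall_hasCommonLeft_or_forall_flip (hρ : IsSegreSurjection R ρ) (hB : IsSegreMap R B) :
    ((∀ x, HasCommonLeft ρ (B x)) ∧ ∀ f, HasCommonLeft ρ.flip (B.flip f)) ∨
      ((∀ x, HasCommonLeft ρ.flip (B x)) ∧ ∀ f, HasCommonLeft ρ (B.flip f)) := by
  by_cases hrows : ∀ x, HasCommonLeft ρ (B x)
  · by_cases hcols : ∀ f, HasCommonLeft ρ.flip (B.flip f)
    · exact .inl ⟨hrows, hcols⟩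
    · obtain ⟨f, hf⟩ := not_forall.1 hcols
      exact .inr (hρ.flip.forall_hasCommonLeft_flip_of_not hB.flip hf).symm
  · obtain ⟨x, hx⟩ := not_forall.1 hrows
    exact .inr (hρ.forall_hasCommonLeft_flip_of_not hB hx)

end IsSegreSurjection

namespace IsSegreMap

variable [RingHomSurjective σ] [RingHomSurjective τ] [RingHomSurjective σ'] [RingHomSurjective τ']
  {R : Set T} {ρ : P →ₛₗ[σ'] Q →ₛₗ[τ'] T} {B : X →ₛₗ[σ] Y →ₛₗ[τ] T}

lemma exists_forall_apply_eq [RingHomCompTriple β τ' τ] [RingHomSurjective β]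
    (hρ : IsSegreMap R ρ) (hB : IsSegreMap R B) {x₀ : X} (hx₀ : x₀ ≠ 0) {a₀ : P} {V : Y →ₛₗ[β] Q}
    (hV : ∀ y, ρ a₀ (V y) = B x₀ y) {x : X} (hrow : HasCommonLeft ρ (B x))
    (hcols : ∀ y, HasCommonLeft ρ.flip (B.flip y)) : ∃ u, ∀ y, ρ u (V y) = B x y := by
  obtain ⟨a, ha⟩ := hrow
  by_cases ha0 : a = 0
  · refine ⟨0, fun y => ?_⟩
    obtain ⟨b, hb⟩ := ha (mem_range_self _ y)
    rw [← hb, ha0, map_zero₂, map_zero₂]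
  obtain ⟨W, hW⟩ := exists_comp_eq_of_range_le (β := β) (hρ.injective_apply ha0) ha
  have hVinj : Function.Injective V := fun y z h =>
    hB.injective_apply hx₀ (by rw [← hV, ← hV, h])
  have hspan : ∀ y, W y ∈ K ∙ V y := fun y => by
    by_cases hxy : B x y = 0
    · rw [hρ.injective_apply ha0 ((hW y).trans (hxy.trans (map_zero _).symm))]
      exact zero_mem _
    obtain ⟨b, hb⟩ := hcols y
    obtain ⟨c, hc⟩ := hb (mem_range_self _ x)
    obtain ⟨c₀, hc₀⟩ := hb (mem_range_self _ x₀)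
    have hy : y ≠ 0 := (ne_zero_of_apply_ne_zero hxy).2
    have hx₀y : ρ a₀ (V y) ≠ 0 := (hV y).trans_ne (hB.apply_ne_zero hx₀ hy)
    have hbV : b ∈ K ∙ V y := (hρ.mem_span_of_apply_eq hx₀y ((hV y).trans hc₀.symm)).2
    have hWb : W y ∈ K ∙ b :=
      (hρ.mem_span_of_apply_eq (hc.trans_ne hxy) (hc.trans (hW y).symm)).2
    exact Submodule.mem_span_singleton_trans hWb hbV
  obtain ⟨c, hc⟩ := exists_eq_smul_of_forall_mem_span_singleton hVinj hspan
  obtain ⟨d, hd⟩ := RingHomSurjective.is_surjective (σ := σ') (τ' c)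
  exact ⟨d • a, fun y => by rw [map_smulₛₗ₂, hd, ← map_smulₛₗ, ← hc, hW]⟩

theorem exists_factorization [RingHomCompTriple α σ' σ] [RingHomCompTriple β τ' τ]
    [RingHomSurjective β] (hρ : IsSegreMap R ρ) (hB : IsSegreMap R B)
    (hrows : ∀ x, HasCommonLeft ρ (B x)) (hcols : ∀ y, HasCommonLeft ρ.flip (B.flip y)) :
    ∃ (U : X →ₛₗ[α] P) (V : Y →ₛₗ[β] Q), ∀ x y, B x y = ρ (U x) (V y) := by
  by_cases hB0 : B = 0
  · exact ⟨0, 0, fun x y => by simp [hB0]⟩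
  obtain ⟨x₀, hx₀⟩ := DFunLike.ne_iff.1 hB0
  obtain ⟨y₀, h₀⟩ := DFunLike.ne_iff.1 hx₀
  obtain ⟨a₀, ha₀⟩ := hrows x₀
  obtain ⟨b₀, hb₀⟩ := ha₀ (mem_range_self _ y₀)
  have ha₀0 : a₀ ≠ 0 := (ne_zero_of_apply_ne_zero (hb₀.trans_ne h₀)).1
  obtain ⟨V, hV⟩ := exists_comp_eq_of_range_le (β := β) (hρ.injective_apply ha₀0) ha₀
  have hVy₀ : V y₀ ≠ 0 := (ne_zero_of_apply_ne_zero ((hV y₀).trans_ne h₀)).2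
  have hleft : ∀ x, ∃ u, ∀ y, ρ u (V y) = B x y := fun x =>
    hρ.exists_forall_apply_eq hB (ne_zero_of_apply_ne_zero h₀).1 hV (hrows x) hcols
  have hrange : range (B.flip y₀) ≤ range (ρ.flip (V y₀)) := by
    rintro _ ⟨x, rfl⟩
    obtain ⟨u, hu⟩ := hleft x
    exact ⟨u, hu y₀⟩
  obtain ⟨U, hU⟩ := exists_comp_eq_of_range_le (β := α) (hρ.flip.injective_apply hVy₀) hrange
  refine ⟨U, V, fun x y => ?_⟩
  obtain ⟨u, hu⟩ := hleft x
  have hUx : U x = u := hρ.flip.injective_apply hVy₀ ((hU x).trans (hu y₀).symm)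
  rw [hUx, hu]

end IsSegreMap

theorem IsSegreSurjection.exists_factorization_or_flip
    [RingHomSurjective σ] [RingHomSurjective τ] [RingHomSurjective σ'] [RingHomSurjective τ']
    {R : Set T} {ρ : P →ₛₗ[σ'] Q →ₛₗ[τ'] T} {B : X →ₛₗ[σ] Y →ₛₗ[τ] T}
    [RingHomCompTriple α σ' σ] [RingHomCompTriple β τ' τ] [RingHomSurjective β]
    [RingHomCompTriple γ τ' σ] [RingHomCompTriple δ σ' τ] [RingHomSurjective δ]
    (hρ : IsSegreSurjection R ρ) (hB : IsSegreMap R B) :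
    (∃ (U : X →ₛₗ[α] P) (V : Y →ₛₗ[β] Q), ∀ x y, B x y = ρ (U x) (V y)) ∨
      ∃ (V : X →ₛₗ[γ] Q) (U : Y →ₛₗ[δ] P), ∀ x y, B x y = ρ (U y) (V x) :=
  (hρ.forall_hasCommonLeft_or_forall_flip hB).imp
    (fun h => hρ.toIsSegreMap.exists_factorization hB h.1 h.2)
    (fun h => hρ.flip.toIsSegreMap.exists_factorization hB h.1 h.2)

end SemilinearMaps

section RankOne

variable {𝕜 E F : Type*} [RCLike 𝕜] [NormedAddCommGroup E] [InnerProductSpace 𝕜 E]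
  [NormedAddCommGroup F] [InnerProductSpace 𝕜 F]

lemma rank_rankOne_le_one (x : E) (f : F) :
    (InnerProductSpace.rankOne 𝕜 x f : F →L[𝕜] E).rank ≤ 1 := by
  refine (rank_submodule_le_one_iff' _).2 ⟨x, ?_⟩
  rintro _ ⟨h, rfl⟩
  exact Submodule.smul_mem _ _ (Submodule.mem_span_singleton_self x)

lemma exists_rankOne_eq_of_rank_le_one [CompleteSpace F] {T : F →L[𝕜] E} (hT : T.rank ≤ 1) :
    ∃ a b, InnerProductSpace.rankOne 𝕜 a b = T := by
  obtain ⟨a, ha⟩ := (rank_submodule_le_one_iff' _).1 hT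
  let φ : F →L[𝕜] 𝕜 := (inner 𝕜 a a)⁻¹ • (innerSL 𝕜 a).comp T
  have hφ : ∀ h, φ h • a = T h := fun h => by
    obtain ⟨c, hc⟩ := Submodule.mem_span_singleton.1 (ha (LinearMap.mem_range_self _ h))
    have hφh : φ h = (inner 𝕜 a a)⁻¹ * inner 𝕜 a (c • a) := by rw [hc]; rfl
    rcases eq_or_ne a 0 with rfl | ha0
    · simpa using hc
    · rw [hφh, inner_smul_right, mul_left_comm, inv_mul_cancel₀ (inner_self_ne_zero.2 ha0),
        mul_one]
      exact hc
  refine ⟨a, (InnerProductSpace.toDual 𝕜 F).symm φ, ?_⟩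
  ext h
  rw [InnerProductSpace.rankOne_apply, InnerProductSpace.toDual_symm_apply, hφ]

lemma exists_inner_eq_zero_of_notMem_span_singleton {f g : F} (h : g ∉ 𝕜 ∙ f) :
    ∃ v, inner 𝕜 f v = 0 ∧ inner 𝕜 g v ≠ 0 := by
  rw [← Submodule.orthogonal_orthogonal (𝕜 ∙ f), Submodule.mem_orthogonal'] at h
  push Not at h
  obtain ⟨v, hv, hgv⟩ := h
  exact ⟨v, Submodule.mem_orthogonal_singleton_iff_inner_right.1 hv, hgv⟩

lemma mem_span_or_mem_span_of_rank_rankOne_add_le_one {x x' : E} {f f' : F} (hx : x ≠ 0)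
    (hf : f ≠ 0)
    (h : (InnerProductSpace.rankOne 𝕜 x f + InnerProductSpace.rankOne 𝕜 x' f').rank ≤ 1) :
    x' ∈ 𝕜 ∙ x ∨ f' ∈ 𝕜 ∙ f := by
  refine or_iff_not_imp_right.2 fun hf' => ?_
  obtain ⟨v, hv, hv'⟩ := exists_inner_eq_zero_of_notMem_span_singleton hf'
  set S := InnerProductSpace.rankOne 𝕜 x f + InnerProductSpace.rankOne 𝕜 x' f' with hS
  obtain ⟨c, hc⟩ := (rank_submodule_le_one_iff' _).1 h
  have hSmem : ∀ w, S w ∈ 𝕜 ∙ c := fun w => hc (LinearMap.mem_range_self _ w)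
  have hSv : S v = inner 𝕜 f' v • x' := by simp [hS, hv]
  have hx'c : x' ∈ 𝕜 ∙ c := ((𝕜 ∙ c).smul_mem_iff hv').1 (hSv ▸ hSmem v)
  have hSf : S f - inner 𝕜 f' f • x' = inner 𝕜 f f • x := by simp [hS]
  have hxc : x ∈ 𝕜 ∙ c := ((𝕜 ∙ c).smul_mem_iff (inner_self_ne_zero.2 hf)).1 <|
    hSf ▸ sub_mem (hSmem f) (Submodule.smul_mem _ _ hx'c)
  exact Submodule.mem_span_singleton_trans hx'c (mem_span_singleton_symm hx hxc)

lemma isSegreSurjection_rankOne [CompleteSpace F] :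
    IsSegreSurjection {T : F →L[𝕜] E | T.rank ≤ 1}
      (InnerProductSpace.rankOne 𝕜 (E := E) (F := F)).toLinearMap₁₂ where
  apply_mem := rank_rankOne_le_one
  eq_zero_or_eq_zero := InnerProductSpace.rankOne_eq_zero.1
  mem_span_or_mem_span := mem_span_or_mem_span_of_rank_rankOne_add_le_one
  exists_apply_eq _ := exists_rankOne_eq_of_rank_le_one

end RankOne

section AlgL

variable {H : Type*} [NormedAddCommGroup H] [InnerProductSpace ℂ H] {L : Set (Submodule ℂ H)}
  {Φ : (H →L[ℂ] H) → (H →L[ℂ] H)} {N : Submodule ℂ H}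

lemma le_minus {E : Submodule ℂ H} (hE : E ∈ L) (h : ¬ N ≤ E) : E ≤ minus L N :=
  (le_sSup (show E ∈ {E | E ∈ L ∧ ¬ N ≤ E} from ⟨hE, h⟩)).trans
    (Submodule.le_topologicalClosure _)

lemma rankOne_mem_algL {x f : H} (hx : x ∈ N) (hf : f ∈ (minus L N)ᗮ) :
    rankOne x f ∈ algL L := by
  intro E hE v hv
  by_cases h : N ≤ E
  · exact E.smul_mem _ (h hx)
  · have hfv : inner ℂ f v = 0 := Submodule.inner_left_of_mem_orthogonal (le_minus hE h hv) hf
    simp [rankOne, hfv]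

lemma add_mem_algL {A B : H →L[ℂ] H} (hA : A ∈ algL L) (hB : B ∈ algL L) : A + B ∈ algL L :=
  fun E hE x hx => E.add_mem (hA E hE x hx) (hB E hE x hx)

/-- The sesquilinear map `(x, f) ↦ Φ (x ⊗ f*)` on `N × N₋^⊥`. -/
noncomputable def onRankOne (hΦ : IsLinearOnAlg L Φ) (N : Submodule ℂ H) :
    N →ₗ[ℂ] ((minus L N)ᗮ : Submodule ℂ H) →ₗ⋆[ℂ] (H →L[ℂ] H) :=
  have hmem (x : N) (f : ((minus L N)ᗮ : Submodule ℂ H)) := rankOne_mem_algL x.2 f.2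
  LinearMap.mk₂'ₛₗ (RingHom.id ℂ) (starRingEnd ℂ) (fun x f => Φ (rankOne (x : H) (f : H)))
    (fun x y f => by
      rw [← hΦ.map_add _ (hmem x f) _ (hmem y f)]
      congr 1; ext; simp [rankOne])
    (fun c x f => by
      rw [RingHom.id_apply, ← hΦ.map_smul _ _ (hmem x f)]
      congr 1; ext; simp [rankOne, smul_comm _ c])
    (fun x f g => by
      rw [← hΦ.map_add _ (hmem x f) _ (hmem x g)]
      congr 1; ext; simp [rankOne, add_smul])
    (fun c x f => by
      rw [← hΦ.map_smul _ _ (hmem x f)]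
      congr 1; ext; simp [rankOne, mul_smul])

lemma RankPreserving.opRank_eq (hΦ : RankPreserving L Φ) {A : H →L[ℂ] H} (hA : A ∈ algL L)
    {n : ℕ} (hn : opRank A ≤ n) : opRank (Φ A) = opRank A :=
  hΦ A hA (hn.trans_lt Cardinal.natCast_lt_aleph0)

lemma opRank_add_rankOne_le_two (x f x' f' : H) :
    opRank (rankOne x f + rankOne x' f') ≤ (2 : ℕ) := by
  refine (LinearMap.rank_add_le _ _).trans ?_
  exact (add_le_add (rank_rankOne_le_one x f) (rank_rankOne_le_one x' f')).trans_eq (by norm_num)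

lemma isSegreMap_onRankOne (hlin : IsLinearOnAlg L Φ) (hrank : RankPreserving L Φ)
    (N : Submodule ℂ H) : IsSegreMap {T : H →L[ℂ] H | T.rank ≤ 1} (onRankOne hlin N) := by
  have hmem (x : N) (f : ((minus L N)ᗮ : Submodule ℂ H)) := rankOne_mem_algL x.2 f.2
  have hle_one (x f : H) : opRank (rankOne x f) ≤ (1 : ℕ) :=
    (rank_rankOne_le_one x f).trans_eq Nat.cast_one.symm
  refine ⟨fun x f => ?_, fun {x f} h => ?_, fun {x f x' f'} hx hf h => ?_⟩
  · exact (hrank.opRank_eq (hmem x f) (hle_one x f)).trans_le (rank_rankOne_le_one (x : H) (f : H))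
  · by_contra! ⟨hx, hf⟩
    have hone : opRank (rankOne (x : H) (f : H)) = 1 :=
      InnerProductSpace.rank_rankOne (by simpa using hx) (by simpa using hf)
    have hzero : opRank (Φ (rankOne (x : H) (f : H))) = 0 := by
      rw [show Φ (rankOne (x : H) (f : H)) = 0 from h]
      exact LinearMap.rank_zero
    exact zero_ne_one (hzero.symm.trans ((hrank.opRank_eq (hmem x f) (hle_one x f)).trans hone))
  · have hsum : opRank (rankOne (x : H) (f : H) + rankOne (x' : H) (f' : H)) ≤ 1 := by
      rw [← hrank.opRank_eq (add_mem_algL (hmem x f) (hmem x' f'))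
        (opRank_add_rankOne_le_two _ _ _ _), hlin.map_add _ (hmem x f) _ (hmem x' f')]
      exact h
    have hspan :=
      mem_span_or_mem_span_of_rank_rankOne_add_le_one (by simpa using hx) (by simpa using hf) hsum
    simpa [Submodule.mem_span_singleton, Subtype.ext_iff] using hspan

theorem stmt_5_general [CompleteSpace H] (hlin : IsLinearOnAlg L Φ) (hrank : RankPreserving L Φ)
    (hN0 : N ≠ ⊥) (hNm : minus L N ≠ ⊤) : Consistent L Φ N ∨ Twisted L Φ N := by
  have hB := isSegreMap_onRankOne hlin hrank N
  rcases isSegreSurjection_rankOne.exists_factorization_or_flip (α := RingHom.id ℂ)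
    (β := RingHom.id ℂ) (γ := starRingEnd ℂ) (δ := starRingEnd ℂ) hB with ⟨U, V, h⟩ | ⟨V, U, h⟩
  · exact .inl ⟨hN0, hNm, U, V, h⟩
  · exact .inr ⟨hN0, hNm, U, V, h⟩

end AlgL

theorem stmt_5 {H : Type*} [NormedAddCommGroup H] [InnerProductSpace ℂ H]
    [CompleteSpace H] [TopologicalSpace.SeparableSpace H]
    (L : Set (Submodule ℂ H)) (hL : IsCSL L)
    (Φ : (H →L[ℂ] H) → (H →L[ℂ] H)) (hlin : IsLinearOnAlg L Φ)
    (hrank : RankPreserving L Φ)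
    (N : Submodule ℂ H) (hN : N ∈ L) (hN0 : N ≠ ⊥) (hNm : minus L N ≠ ⊤) :
    Consistent L Φ N ∨ Twisted L Φ N :=
  stmt_5_general hlin hrank hN0 hNm
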